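/- Let k > 2 and n = 2. Then: (a) every minimal idempotent-sum multiset L of integers from [1, k+1] with |L| ≥ ⌈k/2⌉ + 1 is 1-smooth; and (b) the multiset W consisting of ⌈k/2⌉ copies of 2 is a minimal idempotent-sum multiset that is not 1-smooth. -/

import Mathlib

/-!
Write `m = ⌈k/2⌉ ≥ 2`.

Part (a) rests on two facts. First, a multiset `S` of positive integers with `σ(S) < 2|S|` attains
every value in `[0, σ(S)]` as a subset sum (`exists_sub_sum_of_sum_lt`): removing an element
`M ≥ 2` preserves the hypothesis, and `M ≤ σ(S ∖ M) + 1`, so the sums of `S ∖ M` and their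
translates by `M` cover the interval; if no such `M` exists, all elements are `1`.

Second, a minimal idempotent-sum multiset `L` with `|L| ≥ m + 1` has `σ(L) = 2m`
(`sum_eq_of_minimal`). Indeed, if `σ(L) = 2m + 2t` with `t ≥ 1`, then by minimality no even element
and no sum of two odd elements is at most `2t`, since it could be removed from `L`. Comparing every
element with the smallest one forces `σ(L) > 2m + 2t`. Hence `σ(L) = 2m < 2|L|`, and the first fact
applies.

Part (b): the nonempty proper subsums of `m` copies of `2` are the even numbers below `2m`, so the
multiset is minimal and does not have `1` as a subsum.
-/

open Multiset

/-- `T` has no nonempty sub-multiset summing to zero. -/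
def ZeroSumFree {n : ℕ} (T : Multiset (ZMod n)) : Prop :=
  ∀ U : Multiset (ZMod n), U ≤ T → U ≠ 0 → U.sum ≠ 0

/-- `T` is nonempty, sums to zero, and no nonempty proper sub-multiset sums to zero. -/
def MinimalZeroSum {n : ℕ} (T : Multiset (ZMod n)) : Prop :=
  T ≠ 0 ∧ T.sum = 0 ∧ ∀ U : Multiset (ZMod n), U < T → U ≠ 0 → U.sum ≠ 0

/-- The set of sums of nonempty sub-multisets of `S`. -/
def subSums (S : Multiset ℕ) : Set ℕ :=
  {x | ∃ U : Multiset ℕ, U ≤ S ∧ U ≠ 0 ∧ U.sum = x}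

/-- `S` is 1-smooth: Σ(S) = [1, σ(S)]. -/
def OneSmooth (S : Multiset ℕ) : Prop :=
  subSums S = Set.Icc 1 S.sum

/-- ⌈k/n⌉ for natural numbers (n ≥ 1). -/
def nCeil (k n : ℕ) : ℕ := (k + n - 1) / n

/-- No nonempty sub-multiset `S'` of `S` has `σ(S') ≥ ⌈k/n⌉·n` and `n ∣ σ(S')`. -/
def IdempotentSumFree (k n : ℕ) (S : Multiset ℕ) : Prop :=
  ∀ S' : Multiset ℕ, S' ≤ S → S' ≠ 0 → ¬(nCeil k n * n ≤ S'.sum ∧ n ∣ S'.sum)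

/-- `S` is nonempty, `σ(S) ≥ ⌈k/n⌉·n` and `n ∣ σ(S)`, and no nonempty proper
sub-multiset has both of these properties. -/
def MinimalIdempotentSum (k n : ℕ) (S : Multiset ℕ) : Prop :=
  S ≠ 0 ∧ (nCeil k n * n ≤ S.sum ∧ n ∣ S.sum) ∧
    ∀ S' : Multiset ℕ, S' < S → S' ≠ 0 → ¬(nCeil k n * n ≤ S'.sum ∧ n ∣ S'.sum)

/-- The set of sums of nonempty sub-multisets of `T` over `ZMod n`. -/
def subSumsZ {n : ℕ} (T : Multiset (ZMod n)) : Set (ZMod n) :=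
  {x | ∃ U : Multiset (ZMod n), U ≤ T ∧ U ≠ 0 ∧ U.sum = x}

/-- `T` is (zero-sum free) `g`-smooth: `T = {n₁·g, …, n_ℓ·g}` with
`1 = n₁ ≤ ⋯ ≤ n_ℓ`, `N := n₁ + ⋯ + n_ℓ < n` and `Σ(T) = {g, 2g, …, N·g}`. -/
def GSmooth {n : ℕ} (g : ZMod n) (T : Multiset (ZMod n)) : Prop :=
  ∃ c : Multiset ℕ, T = c.map (fun m => m • g) ∧ 1 ∈ c ∧ (∀ m ∈ c, 1 ≤ m) ∧
    c.sum < n ∧ subSumsZ T = {x | ∃ j : ℕ, 1 ≤ j ∧ j ≤ c.sum ∧ x = j • g}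

/-- `T` is zero-sum `g`-smooth: `T = {n₁·g, …, n_ℓ·g}` with
`1 = n₁ ≤ ⋯ ≤ n_ℓ`, `n₁ + ⋯ + n_ℓ = n` and `Σ(T) = {g, 2g, …, n·g}`. -/
def ZeroSumGSmooth {n : ℕ} (g : ZMod n) (T : Multiset (ZMod n)) : Prop :=
  ∃ c : Multiset ℕ, T = c.map (fun m => m • g) ∧ 1 ∈ c ∧ (∀ m ∈ c, 1 ≤ m) ∧
    c.sum = n ∧ subSumsZ T = {x | ∃ j : ℕ, 1 ≤ j ∧ j ≤ n ∧ x = j • g}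

/-- For a generator `g` of `ZMod n`, the unique `t ∈ [1,n]` with `t • g = a`. -/
noncomputable def normIdx (n : ℕ) (g a : ZMod n) : ℕ :=
  if (a * Ring.inverse g).val = 0 then n else (a * Ring.inverse g).val

/-- `‖T‖_g = (n₁ + ⋯ + n_ℓ)/n` where `T = {n₁·g, …, n_ℓ·g}` with `nᵢ ∈ [1,n]`. -/
noncomputable def normg (n : ℕ) (g : ZMod n) (T : Multiset (ZMod n)) : ℚ :=
  ((T.map (normIdx n g)).sum : ℚ) / n

/-- `ind(T) = 1`: the minimum of `‖T‖_g` over generators `g` equals `1`. -/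
def HasIndexOne (n : ℕ) (T : Multiset (ZMod n)) : Prop :=
  (∃ g : ZMod n, addOrderOf g = n ∧ normg n g T = 1) ∧
  ∀ g : ZMod n, addOrderOf g = n → (1 : ℚ) ≤ normg n g T

lemma card_le_sum_of_pos {S : Multiset ℕ} (h : ∀ x ∈ S, 1 ≤ x) : Multiset.card S ≤ S.sum := by
  simpa using Multiset.card_nsmul_le_sum h

/-- Subset sums, the empty one included, of positive integers whose average is below `2` fill the
whole interval up to the total. -/
lemma exists_sub_sum_of_sum_lt (c : ℕ) : ∀ S : Multiset ℕ, Multiset.card S = c →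
    (∀ x ∈ S, 1 ≤ x) → S.sum < 2 * c → ∀ v ≤ S.sum, ∃ U ≤ S, U.sum = v := by
  induction c with
  | zero => intro S _ _ h; omega
  | succ c ih =>
    intro S hc hpos hsum v hv
    by_cases hM : ∃ M ∈ S, 2 ≤ M
    · obtain ⟨M, hMS, hM2⟩ := hM
      obtain ⟨T, rfl⟩ := Multiset.exists_cons_of_mem hMS
      rw [Multiset.card_cons] at hc
      rw [Multiset.sum_cons] at hsum hv
      have hTpos : ∀ x ∈ T, 1 ≤ x := fun x hx => hpos x (Multiset.mem_cons_of_mem hx)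
      have hT := card_le_sum_of_pos hTpos
      have key := ih T (by omega) hTpos (by omega)
      rcases le_or_gt v T.sum with h | h
      · obtain ⟨U, hU, hUv⟩ := key v h
        exact ⟨U, hU.trans (Multiset.le_cons_self T M), hUv⟩
      · -- here `v ≥ σ(T) + 1 ≥ M`, because `σ(T) ≥ |T|` and `σ(T) + M ≤ 2|T| + 1`
        obtain ⟨U, hU, hUv⟩ := key (v - M) (by omega)
        refine ⟨M ::ₘ U, Multiset.cons_le_cons M hU, ?_⟩
        rw [Multiset.sum_cons]
        omega
    · have hone : S = Multiset.replicate (c + 1) 1 := by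
        refine Multiset.eq_replicate.2 ⟨hc, fun x hx => ?_⟩
        have := hpos x hx
        by_contra hne
        exact hM ⟨x, hx, by omega⟩
      subst hone
      refine ⟨Multiset.replicate v 1, ?_, by simp⟩
      rw [Multiset.replicate_le_replicate]
      simpa [add_comm] using hv

lemma oneSmooth_of_sum_lt {S : Multiset ℕ} (hpos : ∀ x ∈ S, 1 ≤ x)
    (hsum : S.sum < 2 * Multiset.card S) : OneSmooth S := by
  ext v
  simp only [subSums, Set.mem_ofPred_eq, Set.mem_Icc]
  constructor
  · rintro ⟨U, hU, hU0, rfl⟩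
    have h1 := card_le_sum_of_pos fun x hx => hpos x (Multiset.mem_of_le hU hx)
    have h2 := Multiset.card_pos.2 hU0
    obtain ⟨V, rfl⟩ := Multiset.le_iff_exists_add.1 hU
    rw [Multiset.sum_add]
    omega
  · rintro ⟨h1, h2⟩
    obtain ⟨U, hU, hUv⟩ := exists_sub_sum_of_sum_lt _ S rfl hpos hsum v h2
    refine ⟨U, hU, ?_, hUv⟩
    rintro rfl
    simp at hUv
    omega

/-- Removing a part of even sum keeps the sum even, so by minimality it must drop below the
threshold. -/
lemma sum_lt_of_minimal {k : ℕ} {A B : Multiset ℕ} (h : MinimalIdempotentSum k 2 (A + B))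
    (hA : A ≠ 0) (hB : B ≠ 0) (hA2 : 2 ∣ A.sum) : B.sum < nCeil k 2 * 2 := by
  obtain ⟨-, ⟨-, h2⟩, h3⟩ := h
  have hlt : B < A + B := by
    refine lt_of_le_of_ne (Multiset.le_add_left B A) fun he => hA ?_
    simpa using he
  have := h3 B hlt hB
  rw [Multiset.sum_add] at h2
  by_contra hc
  exact this ⟨by omega, by omega⟩

/-- The length hypothesis forces the smallest possible sum. -/
lemma sum_eq_of_minimal {k : ℕ} (hm : 2 ≤ nCeil k 2) {L : Multiset ℕ} (hpos : ∀ x ∈ L, 1 ≤ x)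
    (h : MinimalIdempotentSum k 2 L) (hcard : nCeil k 2 + 1 ≤ Multiset.card L) :
    L.sum = nCeil k 2 * 2 := by
  have hge := h.2.1.1
  have heven := h.2.1.2
  by_contra hne
  obtain ⟨t, ht⟩ : ∃ t, L.sum = 2 * nCeil k 2 + 2 * t := ⟨(L.sum - 2 * nCeil k 2) / 2, by omega⟩
  have ht1 : 1 ≤ t := by omega
  generalize hmdef : nCeil k 2 = m at *
  have hev : ∀ x ∈ L, 2 ∣ x → 2 * t + 2 ≤ x := by
    intro x hx hx2
    obtain ⟨T, rfl⟩ := Multiset.exists_cons_of_mem hx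
    have hT : T ≠ 0 := by rintro rfl; simp at hcard; omega
    have := sum_lt_of_minimal (A := {x}) (B := T) (by simpa using h) (by simp) hT (by simpa using hx2)
    rw [Multiset.sum_cons] at ht
    omega
  -- the smallest element `a` of `L`
  obtain ⟨a, haL, hmin⟩ : ∃ a ∈ L, ∀ x ∈ L, a ≤ x := by
    have hne : L.toFinset.Nonempty := by
      rw [Multiset.toFinset_nonempty]; exact h.1
    obtain ⟨a, ha, hmin⟩ := L.toFinset.exists_min_image id hne
    exact ⟨a, by simpa using ha, fun x hx => hmin x (by simpa using hx)⟩
  obtain ⟨T, rfl⟩ := Multiset.exists_cons_of_mem haL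
  rw [Multiset.card_cons] at hcard
  rw [Multiset.sum_cons] at ht
  have ha1 := hpos a haL
  have haev := hev a haL
  have hodd : ∀ x ∈ T, 2 * t + 2 ≤ a + x := by
    intro x hx
    have hxev := hev x (Multiset.mem_cons_of_mem hx)
    by_cases hx2 : 2 ∣ x
    · have := hxev hx2; omega
    by_cases ha2 : 2 ∣ a
    · have := haev ha2; omega
    obtain ⟨R, rfl⟩ := Multiset.exists_cons_of_mem hx
    have hR : R ≠ 0 := by rintro rfl; simp at hcard; omega
    have := sum_lt_of_minimal (A := {a, x}) (B := R) (by simpa using h) (by simp) hR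
      (by simp; omega)
    rw [Multiset.sum_cons] at ht
    omega
  have bound : ∀ c, (∀ x ∈ T, c ≤ x) → m * c ≤ T.sum := by
    intro c hc
    have h1 : Multiset.card T * c ≤ T.sum := by simpa using Multiset.card_nsmul_le_sum hc
    exact (Nat.mul_le_mul_right c (by omega)).trans h1
  rcases le_or_gt a t with hat | hat
  · -- all elements other than `a` are at least `2t + 2 - a ≥ t + 2`
    obtain ⟨d, rfl⟩ := Nat.exists_eq_add_of_le hat
    have := bound (a + 2 * d + 2) fun x hx => by have := hodd x hx; omega
    nlinarith
  · rcases Nat.lt_or_ge t 2 with h2 | h2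
    · -- `t = 1`: no element is `1`, and none is `2` since even elements are at least `4`
      have := bound 3 fun x hx => by
        have := hmin x (Multiset.mem_cons_of_mem hx)
        have := hev x (Multiset.mem_cons_of_mem hx)
        omega
      omega
    · have := bound (t + 1) fun x hx => by
        have := hmin x (Multiset.mem_cons_of_mem hx)
        omega
      nlinarith

theorem smo_semigroup_period_two (k : ℕ) (hk : 2 < k) :
    (∀ L : Multiset ℕ, (∀ x ∈ L, 1 ≤ x ∧ x ≤ k + 1) →
      MinimalIdempotentSum k 2 L → nCeil k 2 + 1 ≤ Multiset.card L → OneSmooth L) ∧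
    (MinimalIdempotentSum k 2 (Multiset.replicate (nCeil k 2) 2) ∧
      ¬ OneSmooth (Multiset.replicate (nCeil k 2) 2)) := by
  have hm : 2 ≤ nCeil k 2 := by unfold nCeil; omega
  refine ⟨fun L hL h hcard => ?_, ⟨?_, ?_, ?_⟩, ?_⟩
  · have hpos : ∀ x ∈ L, 1 ≤ x := fun x hx => (hL x hx).1
    have := sum_eq_of_minimal hm hpos h hcard
    exact oneSmooth_of_sum_lt hpos (by omega)
  · intro h
    have := congrArg Multiset.card h
    simp at this
    omega
  · simp
  · rintro S hS - ⟨h, -⟩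
    obtain ⟨j, -, rfl⟩ := Multiset.le_replicate_iff.1 hS.le
    have := Multiset.card_lt_card hS
    simp at this h
    omega
  · intro h
    have h1 : 1 ∈ subSums (Multiset.replicate (nCeil k 2) 2) := by
      rw [h]
      simp
      omega
    obtain ⟨U, hU, -, hs⟩ := h1
    obtain ⟨j, -, rfl⟩ := Multiset.le_replicate_iff.1 hU
    simp at hs
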